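/- arXiv:math-ph/0105040 — 2 statements merged into one kernel-verified Lean document; each statement's English description precedes it below -/
import Mathlib

section
/- Shifted antisymmetrization identity: let m be an even integer, n an even integer, r ≥ 0 and s integers, and set ℓ := r + (n−m)/2; assume ℓ > r. For any nonzero complex B and nonzero complex A_{r+1},…,A_ℓ, ∑_{σ} sgn(σ)·∏_{a=r+1}^{ℓ} A_{σ(a)}^{n+1−2s+2r−2a} = (−1)^{ℓ−r−1}·∑_{σ} sgn(σ)·[ ∏_{a=r+1}^{ℓ−1}(1 − A_{σ(a)}²·B⁻²) · A_{σ(ℓ)}^{n−1−2s} · ∏_{a=r+1}^{ℓ−1} A_{σ(a)}^{n−1−2s+2r−2a} ], where both sums run over all permutations σ of {r+1,…,ℓ}. -/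
open Finset Equiv

theorem asym_aux (N : ℕ) (h : N - 1 < N) (p : ℤ) (c : ℂ) (A : Fin N → ℂ) (hA : ∀ a, A a ≠ 0) :
    ∑ σ : Equiv.Perm (Fin N), ((Equiv.Perm.sign σ : ℤ) : ℂ) *
        ∏ a, (A (σ a)) ^ (p - 2 * ((a : ℕ) : ℤ)) =
      (-1 : ℂ) ^ (N - 1) *
        ∑ σ : Equiv.Perm (Fin N), ((Equiv.Perm.sign σ : ℤ) : ℂ) *
          ((∏ a ∈ Finset.univ.filter (fun a : Fin N => (a : ℕ) < N - 1),
              (1 - (A (σ a)) ^ 2 * c)) *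
            (A (σ ⟨N - 1, h⟩)) ^ p *
            ∏ a ∈ Finset.univ.filter (fun a : Fin N => (a : ℕ) < N - 1),
              (A (σ a)) ^ (p - 2 - 2 * ((a : ℕ) : ℤ))) := by
  obtain ⟨k, rfl⟩ : ∃ k, N = k + 1 := ⟨N - 1, by omega⟩
  let M : Matrix (Fin (k+1)) (Fin (k+1)) ℂ := fun j i => A j ^ (p - 2 * ((i : ℕ) : ℤ))
  let G : Matrix (Fin (k+1)) (Fin (k+1)) ℂ := fun j =>
    Fin.cons (A j ^ p) (fun i : Fin k => M j i.succ - c * M j i.castSucc)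
  have hMG : M.det = G.det := by
    apply Matrix.det_eq_of_forall_col_eq_smul_add_pred (fun _ => c)
    · intro i; simp [M, G]
    · intro i j; simp [G]
  have hperm := Matrix.det_permute' (finRotate (k+1)) G
  rw [sign_finRotate] at hperm
  have hM : M.det = (-1 : ℂ) ^ k * (G.submatrix id (finRotate (k+1))).det := by
    rw [hperm, hMG, ← mul_assoc]
    push_cast
    rw [← mul_pow]; simp
  rw [Matrix.det_apply', Matrix.det_apply'] at hM
  simp only [Nat.add_sub_cancel]
  refine hM.trans ?_
  congr 1
  refine Finset.sum_congr rfl fun σ _ => ?_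
  congr 1
  have hf : ∀ f : Fin (k+1) → ℂ,
      ∏ a ∈ Finset.univ.filter (fun a : Fin (k+1) => (a : ℕ) < k), f a
        = ∏ i : Fin k, f i.castSucc := by
    intro f
    rw [Finset.prod_filter, Fin.prod_univ_castSucc]
    simp
  rw [hf, hf, Fin.prod_univ_castSucc, mul_right_comm, ← Finset.prod_mul_distrib]
  congr 1
  · refine Finset.prod_congr rfl fun i _ => ?_
    have h0 := hA (σ i.castSucc)
    have e : finRotate (k+1) i.castSucc = i.succ := by
      rw [finRotate_succ_apply]; simp
    rw [Matrix.submatrix_apply, e]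
    change A (σ i.castSucc) ^ (p - 2 * (((i : ℕ) + 1 : ℕ) : ℤ))
      - c * A (σ i.castSucc) ^ (p - 2 * ((i : ℕ) : ℤ)) = _
    simp only [Fin.val_castSucc]
    have e1 : A (σ i.castSucc) ^ (p - 2 * ((i : ℕ) : ℤ)) =
        A (σ i.castSucc) ^ (p - 2 - 2 * ((i : ℕ) : ℤ)) * A (σ i.castSucc) ^ 2 := by
      rw [← zpow_natCast, ← zpow_add₀ h0]; congr 1; push_cast; ring
    rw [e1, show p - 2 * (((i : ℕ) + 1 : ℕ) : ℤ) = p - 2 - 2 * ((i : ℕ) : ℤ) by push_cast; ring]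
    ring
  · have e : finRotate (k+1) (Fin.last k) = 0 := finRotate_last
    rw [Matrix.submatrix_apply, e]
    rfl

/-- Shifted antisymmetrization identity: `m, n` even integers, `r ≥ 0`, `s`
integers, `ℓ := r + (n−m)/2 > r`; for nonzero `B` and nonzero
`A_{r+1},…,A_ℓ` (indexed by `a : Fin (ℓ−r)` with actual index `r+1+a`),
`Asym ∏_{a=r+1}^{ℓ} A_a^{n+1−2s+2r−2a}
 = (−1)^{ℓ−r−1}·Asym (∏_{a=r+1}^{ℓ−1}(1 − A_a²·B⁻²)·A_ℓ^{n−1−2s}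
     ·∏_{a=r+1}^{ℓ−1} A_a^{n−1−2s+2r−2a})`. -/
theorem asym_shifted (m n : ℤ) (hm : Even m) (hn : Even n) (r : ℕ) (s : ℤ)
    (ℓ : ℕ) (hℓ : (ℓ : ℤ) = r + (n - m) / 2) (hrℓ : r < ℓ)
    (B : ℂ) (hB : B ≠ 0) (A : Fin (ℓ - r) → ℂ) (hA : ∀ a, A a ≠ 0) :
    ∑ σ : Equiv.Perm (Fin (ℓ - r)), ((Equiv.Perm.sign σ : ℤ) : ℂ) *
        ∏ a, (A (σ a)) ^ (n + 1 - 2 * s + 2 * r - 2 * ((r : ℤ) + 1 + (a : ℕ))) =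
      (-1 : ℂ) ^ (ℓ - r - 1) *
        ∑ σ : Equiv.Perm (Fin (ℓ - r)), ((Equiv.Perm.sign σ : ℤ) : ℂ) *
          ((∏ a ∈ Finset.univ.filter (fun a : Fin (ℓ - r) => (a : ℕ) < ℓ - r - 1),
              (1 - (A (σ a)) ^ 2 * (B ^ 2)⁻¹)) *
            (A (σ ⟨ℓ - r - 1, by omega⟩)) ^ (n - 1 - 2 * s) *
            ∏ a ∈ Finset.univ.filter (fun a : Fin (ℓ - r) => (a : ℕ) < ℓ - r - 1),
              (A (σ a)) ^ (n - 1 - 2 * s + 2 * r - 2 * ((r : ℤ) + 1 + (a : ℕ)))) := by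
  have key := asym_aux (ℓ - r) (by omega) (n - 1 - 2 * s) (B ^ 2)⁻¹ A hA
  have e1 : ∀ a : ℕ, n + 1 - 2 * s + 2 * r - 2 * ((r : ℤ) + 1 + a)
      = n - 1 - 2 * s - 2 * (a : ℤ) := by intro a; ring
  have e2 : ∀ a : ℕ, n - 1 - 2 * s + 2 * r - 2 * ((r : ℤ) + 1 + a)
      = n - 1 - 2 * s - 2 - 2 * (a : ℤ) := by intro a; ring
  simp only [e1, e2]
  exact key
end

section
/- Factorization of the cycles P_n under the kinematical specialization: let m ≥ 0 and n ≥ m+2 be even integers, r ∈ ℕ, ℓ := r + (n−m)/2, s ∈ ℕ, k₁,…,k_r ∈ ℕ, g : ℂ → ℂ a function with g(−z) = g(z) for all z, A₁,…,A_ℓ nonzero complex numbers, and B₁,…,B_{n−2}, B nonzero complex numbers such that B₁,…,B_{n−2}, B, −B are pairwise distinct. Then ∑_{σ} sgn(σ)·P'_n(A₁,…,A_r, A_{σ(r+1)},…,A_{σ(ℓ)} | B₁,…,B_{n−2}, B, −B) = (−1)^{(n+m)/2 + s + ℓ−r−1} · B^{2s} · g(B) · ∏_{a=1}^{r}(1 −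 A_a²·B⁻²) · ∑_{σ} sgn(σ)·[ ∏_{a=r+1}^{ℓ−1}(1 − A_{σ(a)}²·B⁻²) · A_{σ(ℓ)}^{n−1−2s} · P'_{n−2}(A₁,…,A_r, A_{σ(r+1)},…,A_{σ(ℓ−1)} | B₁,…,B_{n−2}) ], where both sums run over all permutations σ of {r+1,…,ℓ}. -/
open Finset Equiv

/-- The `N×N` matrix defining `D_N(A₁,…,A_r | B₁,…,B_N)`: first `(N+m)/2` rows
`(B_j^{2i})_j`, `i = 0,…,(N+m−2)/2`; remaining `(N−m)/2` rows
`(g(B_j)·B_j^{2p−1}·∏_{a=1}^{r}(1 − A_a²·B_j⁻²))_j`, `p = 1,…,(N−m)/2`. -/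
noncomputable def Dmat (m N : ℕ) (g : ℂ → ℂ) (r : ℕ) (A : Fin r → ℂ)
    (B : Fin N → ℂ) : Matrix (Fin N) (Fin N) ℂ :=
  fun i j =>
    if (i : ℕ) < (N + m) / 2 then B j ^ (2 * (i : ℕ))
    else g (B j) * B j ^ (2 * ((i : ℕ) - (N + m) / 2) + 1) *
      ∏ a, (1 - (A a) ^ 2 * (B j ^ 2)⁻¹)

/-- `D_N(A₁,…,A_r | B₁,…,B_N) := det M / ∏_{j<j'}(B_j − B_{j'})`. -/
noncomputable def Dval (m N : ℕ) (g : ℂ → ℂ) (r : ℕ) (A : Fin r → ℂ)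
    (B : Fin N → ℂ) : ℂ :=
  (Dmat m N g r A B).det /
    ∏ p ∈ Finset.univ.filter (fun p : Fin N × Fin N => p.1 < p.2), (B p.1 - B p.2)

/-- The cycle
`P'_N(A₁,…,A_r, C₁,…,C_q | B₁,…,B_N) := (∏ B_j)^s · ∏_{a=1}^{r} A_a^{k_a}
  · ∏_{b=1}^{q} C_b^{N+1−2s+2r−2(r+b)} · D_N(A | B)`,
where `C_b` stands for `A_{r+b}` and `q` is instantiated to `(N−m)/2`. -/
noncomputable def Pcyc (m N r s q : ℕ) (k : Fin r → ℕ) (g : ℂ → ℂ)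
    (A : Fin r → ℂ) (C : Fin q → ℂ) (B : Fin N → ℂ) : ℂ :=
  (∏ j, B j) ^ s * (∏ a, A a ^ k a) *
    (∏ b, C b ^ ((N : ℤ) + 1 - 2 * (s : ℤ) + 2 * (r : ℤ) - 2 * ((r : ℤ) + 1 + (b : ℕ)))) *
    Dval m N g r A B

/-- The vector `(B₁, …, B_{n−2}, B, −B)` of length `n`. -/
def extB (n : ℕ) (B : Fin (n - 2) → ℂ) (b : ℂ) : Fin n → ℂ :=
  fun j => if h : (j : ℕ) < n - 2 then B ⟨j, h⟩ else if (j : ℕ) = n - 2 then b else -b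


lemma aux_asym (q : ℕ) (C : Fin (q+1) → ℂ) (hC : ∀ b, C b ≠ 0) (β : ℂ) (e : ℤ) :
    ∑ σ : Equiv.Perm (Fin (q+1)), ((Equiv.Perm.sign σ : ℤ) : ℂ) *
        ∏ b, C (σ b) ^ (e - 2 * ((b : ℕ) : ℤ)) =
      (-1) ^ q * ∑ σ : Equiv.Perm (Fin (q+1)), ((Equiv.Perm.sign σ : ℤ) : ℂ) *
        ((∏ b : Fin q, (1 - C (σ b.castSucc) ^ 2 * β)) * C (σ (Fin.last q)) ^ e *
          ∏ b : Fin q, C (σ b.castSucc) ^ (e - 2 - 2 * ((b : ℕ) : ℤ))) := by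
  let M1 : Matrix (Fin (q+1)) (Fin (q+1)) ℂ := fun a b => C a ^ (e - 2 * ((b : ℕ) : ℤ))
  let M3 : Matrix (Fin (q+1)) (Fin (q+1)) ℂ := fun a b =>
    Fin.cases (motive := fun _ => ℂ) (C a ^ e)
      (fun b : Fin q => (1 - C a ^ 2 * β) * C a ^ (e - 2 - 2 * ((b : ℕ) : ℤ))) b
  have h13 : M1.det = M3.det := by
    apply Matrix.det_eq_of_forall_col_eq_smul_add_pred (fun _ : Fin q => β)
    · intro i; simp [M1, M3]
    · intro i j
      simp only [M1, M3, Fin.cases_succ, Fin.val_succ, Fin.val_castSucc]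
      have h1 : C i ^ (e - 2 * ((j : ℕ) : ℤ)) = C i ^ 2 * C i ^ (e - 2 - 2 * ((j : ℕ) : ℤ)) := by
        rw [← zpow_natCast (C i) 2, ← zpow_add₀ (hC i)]; congr 1; push_cast; ring
      have h2 : (e - 2 * (((j : ℕ) + 1 : ℕ) : ℤ)) = (e - 2 - 2 * ((j : ℕ) : ℤ)) := by
        push_cast; ring
      rw [h1, h2]; ring
  have h32 := Matrix.det_permute' (finRotate (q+1)) M3
  rw [sign_finRotate] at h32
  have h1 : M1.det = ∑ σ : Equiv.Perm (Fin (q+1)), ((Equiv.Perm.sign σ : ℤ) : ℂ) *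
        ∏ b, C (σ b) ^ (e - 2 * ((b : ℕ) : ℤ)) := by
    rw [Matrix.det_apply']
  have h2 : (M3.submatrix id (finRotate (q+1))).det =
      ∑ σ : Equiv.Perm (Fin (q+1)), ((Equiv.Perm.sign σ : ℤ) : ℂ) *
        ((∏ b : Fin q, (1 - C (σ b.castSucc) ^ 2 * β)) * C (σ (Fin.last q)) ^ e *
          ∏ b : Fin q, C (σ b.castSucc) ^ (e - 2 - 2 * ((b : ℕ) : ℤ))) := by
    rw [Matrix.det_apply']
    apply Finset.sum_congr rfl
    intro σ _
    congr 1
    rw [Fin.prod_univ_castSucc]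
    have : ∀ b : Fin q, finRotate (q+1) b.castSucc = b.succ := by
      intro b; simp
    simp only [Matrix.submatrix_apply, id, this, finRotate_last]
    simp only [M3, Fin.cases_succ, Fin.cases_zero, Finset.prod_mul_distrib]
    ring
  rw [← h1, ← h2, h32, h13, ← mul_assoc]
  push_cast
  rw [← pow_add, ← two_mul, pow_mul]; simp

lemma aux_det (N : ℕ) (p : Fin (N+1)) (y : ℂ) (X : Matrix (Fin (N+2)) (Fin (N+2)) ℂ)
    (h1 : ∀ i, X i (Fin.last N).castSucc = if i = 0 then 1 else if i = p.succ then y else 0)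
    (h2 : ∀ i, X i (Fin.last (N+1)) = if i = 0 then 1 else if i = p.succ then -y else 0) :
    X.det = 2 * (-1) ^ ((p : ℕ) + 1) * y *
      (X.submatrix (fun i : Fin N => (p.succAbove i).succ)
        (fun j : Fin N => j.castSucc.castSucc)).det := by
  have hs : ((-1 : ℂ) ^ N) * (-1) ^ N = 1 := by
    rw [← pow_add, ← two_mul, pow_mul]; simp
  rw [Matrix.det_succ_column X (Fin.last (N+1)), Fin.sum_univ_succ,
    Finset.sum_eq_single p]
  rotate_left
  · intro i _ hi
    rw [h2]; simp [hi]
  · simp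
  rw [h2, h2]
  simp only [if_true, Fin.succ_ne_zero, if_false, Fin.succAbove_last, Fin.succAbove_zero]
  rw [Matrix.det_succ_column (X.submatrix Fin.succ Fin.castSucc) (Fin.last N),
    Finset.sum_eq_single p]
  rotate_left
  · intro i _ hi
    rw [Matrix.submatrix_apply, h1]; simp [hi]
  · simp
  rw [Matrix.det_succ_column (X.submatrix p.succ.succAbove Fin.castSucc) (Fin.last N),
    Finset.sum_eq_single 0]
  rotate_left
  · intro i _ hi
    obtain ⟨i, rfl⟩ := Fin.exists_succ_eq.2 hi
    rw [Matrix.submatrix_apply, h1, Fin.succ_succAbove_succ]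
    simp [Fin.succAbove_ne]
  · simp
  rw [Matrix.submatrix_apply, Matrix.submatrix_apply, h1, h1]
  simp only [Matrix.submatrix_submatrix, Fin.succAbove_last, Fin.succAbove_zero,
    Fin.succ_succAbove_zero, Fin.succ_ne_zero, if_true, if_false]
  have e1 : (p.succ.succAbove ∘ Fin.succ) = (fun i : Fin N => (p.succAbove i).succ) := by
    funext i; simp [Fin.succ_succAbove_succ]
  have e2 : ((Fin.succ : Fin (N+1) → Fin (N+2)) ∘ p.succAbove) = (fun i : Fin N => (p.succAbove i).succ) := rfl
  have e3 : ((Fin.castSucc : Fin (N+1) → Fin (N+2)) ∘ (Fin.castSucc : Fin N → Fin (N+1))) = (fun j : Fin N => j.castSucc.castSucc) := rfl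
  rw [e1, e2, e3]
  generalize (X.submatrix (fun i : Fin N => (p.succAbove i).succ)
    (fun j : Fin N => j.castSucc.castSucc)).det = d
  simp only [Fin.val_zero, Fin.val_last, Fin.val_succ, pow_add, pow_one, pow_zero]
  linear_combination (-2 * (-1) ^ (p : ℕ) * y * d) * hs

lemma extB_cc (N : ℕ) (B : Fin N → ℂ) (b : ℂ) (j : Fin N) :
    extB (N+2) B b j.castSucc.castSucc = B j := by simp [extB]
lemma extB_cl (N : ℕ) (B : Fin N → ℂ) (b : ℂ) :
    extB (N+2) B b (Fin.last N).castSucc = b := by simp [extB]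
lemma extB_l (N : ℕ) (B : Fin N → ℂ) (b : ℂ) :
    extB (N+2) B b (Fin.last (N+1)) = -b := by simp [extB]

lemma aux_vdm (N : ℕ) (B : Fin N → ℂ) (b : ℂ) :
    ∏ p ∈ Finset.univ.filter (fun p : Fin (N+2) × Fin (N+2) => p.1 < p.2),
      (extB (N+2) B b p.1 - extB (N+2) B b p.2) =
    (∏ j, (B j ^ 2 - b ^ 2)) * (2 * b) *
      ∏ p ∈ Finset.univ.filter (fun p : Fin N × Fin N => p.1 < p.2), (B p.1 - B p.2) := by
  have hl : ∀ (M : ℕ) (i : Fin M), ¬ (Fin.last M < i.castSucc) := by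
    intro M i; exact not_lt.2 (Fin.le_last _)
  rw [Finset.prod_filter, Finset.prod_filter, Fintype.prod_prod_type, Fintype.prod_prod_type]
  simp only [Fin.prod_univ_castSucc (n := N+1), Fin.prod_univ_castSucc (n := N), extB_cc,
    extB_cl, extB_l, Fin.castSucc_lt_castSucc_iff, Fin.castSucc_lt_last, hl, lt_irrefl,
    if_true, if_false, Finset.prod_const_one, Finset.prod_mul_distrib]
  have : ∏ j, (B j ^ 2 - b ^ 2) = (∏ j, (B j - b)) * ∏ j, (B j - -b) := by
    rw [← Finset.prod_mul_distrib]; apply Finset.prod_congr rfl; intros; ring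
  rw [this]; ring

lemma aux_D (m N r : ℕ) (hm : m ≤ N) (g : ℂ → ℂ) (hg : ∀ z, g (-z) = g z)
    (A : Fin r → ℂ) (B : Fin N → ℂ) (b : ℂ) (hb : b ≠ 0)
    (hd : Function.Injective (extB (N+2) B b)) :
    Dval m (N+2) g r A (extB (N+2) B b) =
      (-1) ^ ((N+2+m)/2) * (g b * ∏ a, (1 - (A a) ^ 2 * (b ^ 2)⁻¹)) * Dval m N g r A B := by
  have hne : ∏ j, (B j ^ 2 - b ^ 2) ≠ 0 := by
    rw [Finset.prod_ne_zero_iff]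
    intro j _ h
    rcases sq_eq_sq_iff_eq_or_eq_neg.1 (sub_eq_zero.1 h) with h | h
    · rw [← extB_cc N B b j, ← extB_cl N B b] at h
      rw [extB_cl N B b] at h
      have := hd (h.trans (extB_cl N B b).symm)
      simp [Fin.ext_iff] at this; omega
    · have := hd ((extB_cc N B b j).trans (h.trans (extB_l N B b).symm))
      simp [Fin.ext_iff] at this; omega
  obtain ⟨P, hP⟩ : ∃ P, P = (N+m)/2 := ⟨_, rfl⟩
  have hP2 : (N+2+m)/2 = P+1 := by omega
  have hPN : P < N+1 := by omega
  let H : ℂ → ℂ := fun z => g z * ∏ a, (1 - (A a) ^ 2 * (z ^ 2)⁻¹)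
  let E := extB (N+2) B b
  let p : Fin (N+1) := ⟨P, hPN⟩
  let X : Matrix (Fin (N+2)) (Fin (N+2)) ℂ := fun i j =>
    if (i : ℕ) = 0 then 1 else if (i : ℕ) < P + 1 then (E j ^ 2 - b ^ 2) * E j ^ (2 * ((i:ℕ) - 1))
    else if (i : ℕ) = P + 1 then H (E j) * E j
    else (E j ^ 2 - b ^ 2) * (H (E j) * E j ^ (2 * ((i : ℕ) - P - 2) + 1))
  have hDX : (Dmat m (N+2) g r A E).det = X.det := by
    apply Matrix.det_eq_of_forall_row_eq_smul_add_pred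
      (fun i : Fin (N+1) => if (i : ℕ) = P then 0 else b ^ 2)
    · intro j; simp [Dmat, X, hP2]
    · intro i j
      simp only [Dmat, X, hP2, Fin.val_succ, Fin.val_castSucc]
      rcases lt_trichotomy (i : ℕ) P with h | h | h
      · have a1 : (i : ℕ) ≠ P := by omega
        have a2 : (i : ℕ) < P + 1 := by omega
        simp [h, a1, a2]; ring
      · simp [h, H]; ring
      · obtain ⟨t, ht⟩ : ∃ t, (i : ℕ) = P + 1 + t := ⟨i - (P+1), by omega⟩
        have a1 : P + 1 + t + 1 - (P + 1) = t + 1 := by omega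
        have a2 : P + 1 + t + 1 - P - 2 = t := by omega
        have a3 : ¬ (P + 1 + t = P) := by omega
        have a4 : ¬ (P + 1 + t + 1 = P + 1) := by omega
        have a5 : ¬ (P + 1 + t + 1 < P + 1) := by omega
        have a6 : ¬ (P + 1 + t < P + 1) := by omega
        have a7 : P + 1 + t - (P + 1) = t := by omega
        have a8 : ¬ (P + 1 + t + 1 = 0) := by omega
        simp only [ht, a1, a2, a3, a4, a5, a6, a7, a8, if_false, H]
        ring
  have hX := aux_det N p (H b * b) X
    (by
      intro i
      simp only [X, E, extB_cl, sub_self, zero_mul, Fin.ext_iff, Fin.val_zero, Fin.val_succ, p]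
      split_ifs <;> first | rfl | omega)
    (by
      intro i
      have hH : H (-b) = H b := by simp [H, hg]
      simp only [X, E, extB_l, neg_sq, sub_self, zero_mul, Fin.ext_iff, Fin.val_zero,
        Fin.val_succ, p, hH]
      split_ifs <;> first | rfl | omega | ring)
  have hS : (X.submatrix (fun i : Fin N => (p.succAbove i).succ)
        (fun j : Fin N => j.castSucc.castSucc)) =
      Matrix.of (fun i j => (B j ^ 2 - b ^ 2) * Dmat m N g r A B i j) := by
    ext i j
    simp only [Matrix.submatrix_apply, Matrix.of_apply]
    simp only [X, E, extB_cc, Fin.val_succ, Dmat, ← hP]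
    by_cases h : (i : ℕ) < P
    · have : p.succAbove i = i.castSucc := Fin.succAbove_of_castSucc_lt _ _ (by
        simpa [Fin.lt_def, p] using h)
      simp [this, h]
    · have : p.succAbove i = i.succ := Fin.succAbove_of_le_castSucc _ _ (by
        simpa [Fin.le_def, p] using h)
      have a1 : ¬ ((i : ℕ) + 1 + 1 < P + 1) := by omega
      have a2 : ¬ ((i : ℕ) + 1 + 1 = P + 1) := by omega
      have a3 : (i : ℕ) + 1 + 1 - P - 2 = i - P := by omega
      have a4 : ¬ ((i : ℕ) + 1 + 1 = 0) := by omega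
      simp only [this, h, Fin.val_succ, a1, a2, a3, a4, if_false, H]
      ring
  rw [hS, Matrix.det_mul_row] at hX
  unfold Dval
  rw [aux_vdm, show (Dmat m (N+2) g r A (extB (N+2) B b)).det = _ from hDX, hX, hP2]
  generalize (∏ p ∈ Finset.univ.filter (fun p : Fin N × Fin N => p.1 < p.2), (B p.1 - B p.2)) = V
  generalize (Dmat m N g r A B).det = d
  change 2 * (-1) ^ (P + 1) * (H b * b) * _ / _ = (-1) ^ (P+1) * H b * _
  generalize H b = h
  generalize (∏ j, (B j ^ 2 - b ^ 2)) = W at *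
  by_cases hV : V = 0
  · simp [hV]
  · field_simp

lemma aux_main (m N q Q : ℕ) (hQ : Q = q + 1) (hmn : m ≤ N)
    (r s : ℕ) (k : Fin r → ℕ) (g : ℂ → ℂ) (hg : ∀ z, g (-z) = g z)
    (A : Fin r → ℂ)
    (C : Fin Q → ℂ) (hC : ∀ b, C b ≠ 0)
    (B : Fin N → ℂ) (Bn : ℂ) (hBn : Bn ≠ 0)
    (hdist : Function.Injective (extB (N+2) B Bn)) :
    ∑ σ : Equiv.Perm (Fin Q), ((Equiv.Perm.sign σ : ℤ) : ℂ) *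
        Pcyc m (N+2) r s Q k g A (fun b => C (σ b)) (extB (N+2) B Bn) =
      (-1 : ℂ) ^ ((N+2 + m) / 2 + s + (Q - 1)) * Bn ^ (2 * s) * g Bn *
        (∏ a, (1 - (A a) ^ 2 * (Bn ^ 2)⁻¹)) *
        ∑ σ : Equiv.Perm (Fin Q), ((Equiv.Perm.sign σ : ℤ) : ℂ) *
          ((∏ b ∈ Finset.univ.filter
              (fun b : Fin Q => (b : ℕ) < Q - 1),
              (1 - (C (σ b)) ^ 2 * (Bn ^ 2)⁻¹)) *
            (C (σ ⟨Q - 1, by omega⟩)) ^ (((N+2 : ℕ) : ℤ) - 1 - 2 * (s : ℤ)) *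
            Pcyc m N r s q k g A
              (fun b : Fin q => C (σ ⟨(b : ℕ), by omega⟩)) B) := by
  subst hQ
  have key := aux_asym q C hC (Bn ^ 2)⁻¹ (((N+2 : ℕ) : ℤ) - 1 - 2 * (s : ℤ))
  have hprod : ∏ j, extB (N+2) B Bn j = (∏ j, B j) * (-1) * Bn ^ 2 := by
    rw [Fin.prod_univ_castSucc, Fin.prod_univ_castSucc]
    simp only [extB_cc, extB_cl, extB_l]; ring
  have hf : ∀ σ : Equiv.Perm (Fin (q+1)), (∏ b ∈ Finset.univ.filter
      (fun b : Fin (q+1) => (b : ℕ) < q + 1 - 1), (1 - (C (σ b)) ^ 2 * (Bn ^ 2)⁻¹)) =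
      ∏ b : Fin q, (1 - C (σ b.castSucc) ^ 2 * (Bn ^ 2)⁻¹) := by
    intro σ
    rw [Finset.prod_filter, Fin.prod_univ_castSucc]
    simp
  have hL : ∀ σ : Equiv.Perm (Fin (q+1)), ((Equiv.Perm.sign σ : ℤ) : ℂ) *
        Pcyc m (N+2) r s (q+1) k g A (fun b => C (σ b)) (extB (N+2) B Bn) =
      ((∏ j, B j) * (-1) * Bn ^ 2) ^ s * (∏ a, A a ^ k a) *
        Dval m (N+2) g r A (extB (N+2) B Bn) * (((Equiv.Perm.sign σ : ℤ) : ℂ) *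
        ∏ b, C (σ b) ^ (((N+2 : ℕ) : ℤ) - 1 - 2 * (s : ℤ) - 2 * ((b : ℕ) : ℤ))) := by
    intro σ
    unfold Pcyc
    rw [hprod]
    have : ∀ b : Fin (q+1), ((N+2 : ℕ) : ℤ) + 1 - 2 * (s : ℤ) + 2 * (r : ℤ) -
        2 * ((r : ℤ) + 1 + (b : ℕ)) = ((N+2 : ℕ) : ℤ) - 1 - 2 * (s : ℤ) - 2 * ((b : ℕ) : ℤ) := by
      intro b; ring
    simp only [this]
    ring
  have hR : ∀ σ : Equiv.Perm (Fin (q+1)), ((Equiv.Perm.sign σ : ℤ) : ℂ) *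
          ((∏ b ∈ Finset.univ.filter
              (fun b : Fin (q+1) => (b : ℕ) < q + 1 - 1),
              (1 - (C (σ b)) ^ 2 * (Bn ^ 2)⁻¹)) *
            (C (σ ⟨q + 1 - 1, by omega⟩)) ^ (((N+2 : ℕ) : ℤ) - 1 - 2 * (s : ℤ)) *
            Pcyc m N r s q k g A
              (fun b : Fin q => C (σ ⟨(b : ℕ), by omega⟩)) B) =
      (∏ j, B j) ^ s * (∏ a, A a ^ k a) * Dval m N g r A B *
      (((Equiv.Perm.sign σ : ℤ) : ℂ) *
        ((∏ b : Fin q, (1 - C (σ b.castSucc) ^ 2 * (Bn ^ 2)⁻¹)) *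
          C (σ (Fin.last q)) ^ (((N+2 : ℕ) : ℤ) - 1 - 2 * (s : ℤ)) *
          ∏ b : Fin q, C (σ b.castSucc) ^
            (((N+2 : ℕ) : ℤ) - 1 - 2 * (s : ℤ) - 2 - 2 * ((b : ℕ) : ℤ)))) := by
    intro σ
    rw [hf]
    unfold Pcyc
    have : ∀ b : Fin q, ((N : ℕ) : ℤ) + 1 - 2 * (s : ℤ) + 2 * (r : ℤ) -
        2 * ((r : ℤ) + 1 + (b : ℕ)) =
        ((N+2 : ℕ) : ℤ) - 1 - 2 * (s : ℤ) - 2 - 2 * ((b : ℕ) : ℤ) := by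
      intro b; push_cast; ring
    simp only [this]
    have e1 : (⟨q + 1 - 1, by omega⟩ : Fin (q+1)) = Fin.last q := rfl
    have e2 : ∀ b : Fin q, (⟨(b : ℕ), by omega⟩ : Fin (q+1)) = b.castSucc := fun _ => rfl
    simp only [e1, e2]
    ring
  simp only [hL, hR]
  rw [← Finset.mul_sum, ← Finset.mul_sum, key, aux_D m N r hmn g hg A B Bn hBn hdist]
  simp only [Nat.add_sub_cancel, pow_add, mul_pow, pow_mul]
  ring

/-- Factorization of the cycles `P_n` under the kinematical specialization
`B_{n−1} = B`, `B_n = −B`: with `ℓ = r + (n−m)/2`,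
`Asym P'_n(A₁,…,A_r, A_{σ(r+1)},…,A_{σ(ℓ)} | B₁,…,B_{n−2},B,−B)
 = (−1)^{(n+m)/2+s+ℓ−r−1}·B^{2s}·g(B)·∏_{a=1}^{r}(1−A_a²B⁻²)
   ·Asym(∏_{a=r+1}^{ℓ−1}(1−A_{σ(a)}²B⁻²)·A_{σ(ℓ)}^{n−1−2s}
     ·P'_{n−2}(A₁,…,A_r,A_{σ(r+1)},…,A_{σ(ℓ−1)} | B₁,…,B_{n−2}))`. -/
theorem Pcyc_factorization (m n : ℕ) (hm : Even m) (hn : Even n) (hmn : m + 2 ≤ n)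
    (r s : ℕ) (k : Fin r → ℕ) (g : ℂ → ℂ) (hg : ∀ z, g (-z) = g z)
    (A : Fin r → ℂ) (hA : ∀ a, A a ≠ 0)
    (C : Fin ((n - m) / 2) → ℂ) (hC : ∀ b, C b ≠ 0)
    (B : Fin (n - 2) → ℂ) (Bn : ℂ) (hB : ∀ j, B j ≠ 0) (hBn : Bn ≠ 0)
    (hdist : Function.Injective (extB n B Bn)) :
    ∑ σ : Equiv.Perm (Fin ((n - m) / 2)), ((Equiv.Perm.sign σ : ℤ) : ℂ) *
        Pcyc m n r s ((n - m) / 2) k g A (fun b => C (σ b)) (extB n B Bn) =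
      (-1 : ℂ) ^ ((n + m) / 2 + s + ((n - m) / 2 - 1)) * Bn ^ (2 * s) * g Bn *
        (∏ a, (1 - (A a) ^ 2 * (Bn ^ 2)⁻¹)) *
        ∑ σ : Equiv.Perm (Fin ((n - m) / 2)), ((Equiv.Perm.sign σ : ℤ) : ℂ) *
          ((∏ b ∈ Finset.univ.filter
              (fun b : Fin ((n - m) / 2) => (b : ℕ) < (n - m) / 2 - 1),
              (1 - (C (σ b)) ^ 2 * (Bn ^ 2)⁻¹)) *
            (C (σ ⟨(n - m) / 2 - 1, by omega⟩)) ^ ((n : ℤ) - 1 - 2 * (s : ℤ)) *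
            Pcyc m (n - 2) r s ((n - 2 - m) / 2) k g A
              (fun b : Fin ((n - 2 - m) / 2) => C (σ ⟨(b : ℕ), by omega⟩)) B) := by
  obtain ⟨N, rfl⟩ : ∃ N, n = N + 2 := ⟨n - 2, by omega⟩
  exact aux_main m N ((N + 2 - 2 - m) / 2) ((N + 2 - m) / 2) (by omega) (by omega)
    r s k g hg A C hC B Bn hBn hdist
end
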